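/- There exist absolute constants C1, C2 > 0 such that for every finite irreducible reversible Markov chain (Ω,P,π), every probability measure μ on Ω, every 0 < α ≤ 1/2 and every real t ≥ 1: d_ave(φ_{α,C1}(t), μ) ≤ d_L(2t, μ) + C2 · t^{−α}. Moreover the same inequality holds with the worst-case distances d_ave(φ_{α,C1}(t)) and d_L(2t) in place of the μ-versions. -/

import Mathlib

open Matrix Filter Asymptotics

/-- `P` is a stochastic matrix. -/
def IsStochastic {Ω : Type*} [Fintype Ω] (P : Matrix Ω Ω ℝ) : Prop :=
  (∀ x y, 0 ≤ P x y) ∧ ∀ x, ∑ y, P x y = 1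

/-- `P` is irreducible. -/
def IsIrreducibleMatrix {Ω : Type*} [Fintype Ω] [DecidableEq Ω] (P : Matrix Ω Ω ℝ) : Prop :=
  ∀ x y, ∃ n : ℕ, 0 < (P ^ n) x y

/-- `μ` is a probability vector. -/
def IsProbVec {Ω : Type*} [Fintype Ω] (μ : Ω → ℝ) : Prop :=
  (∀ x, 0 ≤ μ x) ∧ ∑ x, μ x = 1

/-- The chain `(P, pi)` is reversible. -/
def IsReversible {Ω : Type*} [Fintype Ω] (P : Matrix Ω Ω ℝ) (pi : Ω → ℝ) : Prop :=
  ∀ x y, pi x * P x y = pi y * P y x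

/-- A finite irreducible Markov chain `P` with stationary distribution `pi`. -/
def IsMC {Ω : Type*} [Fintype Ω] [DecidableEq Ω] (P : Matrix Ω Ω ℝ) (pi : Ω → ℝ) : Prop :=
  IsStochastic P ∧ IsIrreducibleMatrix P ∧ IsProbVec pi ∧ pi ᵥ* P = pi

/-- A finite irreducible reversible Markov chain `P` with stationary distribution `pi`. -/
def IsRevMC {Ω : Type*} [Fintype Ω] [DecidableEq Ω] (P : Matrix Ω Ω ℝ) (pi : Ω → ℝ) : Prop :=
  IsMC P pi ∧ IsReversible P pi

/-- Total-variation distance between two measures on a finite set. -/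
noncomputable def tvDist {Ω : Type*} [Fintype Ω] (μ ν : Ω → ℝ) : ℝ :=
  (∑ x, |μ x - ν x|) / 2

/-- The lazy version `(I + P)/2` of `P`. -/
noncomputable def lazyM {Ω : Type*} [Fintype Ω] [DecidableEq Ω] (P : Matrix Ω Ω ℝ) :
    Matrix Ω Ω ℝ :=
  (2 : ℝ)⁻¹ • (1 + P)

/-- `d_c(t, μ)`: TV distance from stationarity of the continuous-time chain at time `t`,
started from `μ`. -/
noncomputable def contDist {Ω : Type*} [Fintype Ω] [DecidableEq Ω] (P : Matrix Ω Ω ℝ) (pi : Ω → ℝ)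
    (t : ℝ) (μ : Ω → ℝ) : ℝ :=
  tvDist (fun y => ∑' k : ℕ, Real.exp (-t) * t ^ k / (Nat.factorial k) * (μ ᵥ* (P ^ k)) y) pi

/-- `d_L(t, μ)`: TV distance from stationarity of the lazy chain at (discrete) time `t`,
started from `μ`. -/
noncomputable def lazyDist {Ω : Type*} [Fintype Ω] [DecidableEq Ω] (P : Matrix Ω Ω ℝ)
    (pi : Ω → ℝ) (t : ℝ) (μ : Ω → ℝ) : ℝ :=
  tvDist (μ ᵥ* (lazyM P ^ ⌊t⌋₊)) pi

/-- `d_ave(t, μ)`: TV distance from stationarity of the averaged chain at (discrete) time `t`,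
started from `μ`. -/
noncomputable def aveDist {Ω : Type*} [Fintype Ω] [DecidableEq Ω] (P : Matrix Ω Ω ℝ) (pi : Ω → ℝ)
    (t : ℝ) (μ : Ω → ℝ) : ℝ :=
  tvDist (fun y => ((μ ᵥ* (P ^ ⌊t⌋₊)) y + (μ ᵥ* (P ^ (⌊t⌋₊ + 1))) y) / 2) pi

/-- The point mass at `x`. -/
noncomputable def deltaMass {Ω : Type*} [DecidableEq Ω] (x : Ω) : Ω → ℝ :=
  fun y => if y = x then 1 else 0

/-- Worst-case continuous-time distance `d_c(t)`. -/
noncomputable def contDistMax {Ω : Type*} [Fintype Ω] [DecidableEq Ω] (P : Matrix Ω Ω ℝ)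
    (pi : Ω → ℝ) (t : ℝ) : ℝ :=
  ⨆ x : Ω, contDist P pi t (deltaMass x)

/-- Worst-case lazy distance `d_L(t)`. -/
noncomputable def lazyDistMax {Ω : Type*} [Fintype Ω] [DecidableEq Ω] (P : Matrix Ω Ω ℝ)
    (pi : Ω → ℝ) (t : ℝ) : ℝ :=
  ⨆ x : Ω, lazyDist P pi t (deltaMass x)

/-- Worst-case averaged distance `d_ave(t)`. -/
noncomputable def aveDistMax {Ω : Type*} [Fintype Ω] [DecidableEq Ω] (P : Matrix Ω Ω ℝ)
    (pi : Ω → ℝ) (t : ℝ) : ℝ :=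
  ⨆ x : Ω, aveDist P pi t (deltaMass x)

/-- `φ_{α,C}(t) = t + ⌈C t^{(1+2α)/2} √(α log t)⌉`. -/
noncomputable def phiAC (α C t : ℝ) : ℝ :=
  t + ((⌈C * t ^ ((1 + 2 * α) / 2) * Real.sqrt (α * Real.log t)⌉ : ℤ) : ℝ)

/-- `ψ_{α,C}(x) = min (1, x + C |log(2x)|^{-α})`. -/
noncomputable def psiAC (α C x : ℝ) : ℝ :=
  min 1 (x + C * |Real.log (2 * x)| ^ (-α))

/-- `t_c(ε)`, the `ε`-mixing time of the continuous-time chain. -/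
noncomputable def contMix {Ω : Type*} [Fintype Ω] [DecidableEq Ω] (P : Matrix Ω Ω ℝ)
    (pi : Ω → ℝ) (ε : ℝ) : ℝ :=
  sInf {t : ℝ | 0 ≤ t ∧ contDistMax P pi t ≤ ε}

/-- `t_L(ε)`, the `ε`-mixing time of the lazy chain. -/
noncomputable def lazyMix {Ω : Type*} [Fintype Ω] [DecidableEq Ω] (P : Matrix Ω Ω ℝ)
    (pi : Ω → ℝ) (ε : ℝ) : ℕ :=
  sInf {t : ℕ | lazyDistMax P pi t ≤ ε}

/-- `t_ave(ε)`, the `ε`-mixing time of the averaged chain. -/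
noncomputable def aveMix {Ω : Type*} [Fintype Ω] [DecidableEq Ω] (P : Matrix Ω Ω ℝ)
    (pi : Ω → ℝ) (ε : ℝ) : ℕ :=
  sInf {t : ℕ | aveDistMax P pi t ≤ ε}

section Helpers

/-- A real sequence lemma: if `D k = m k - 2 m (k+1) + m (k+2)` is antitone and nonneg, with `m`
nonnegative and antitone, then `(k+1)^2 D k ≤ 2 m 0`. -/
theorem second_diff_bound (m D : ℕ → ℝ) (hm : ∀ k, 0 ≤ m k) (hm' : ∀ k, m (k + 1) ≤ m k)
    (hD : ∀ k, D k = m k - 2 * m (k + 1) + m (k + 2)) (hD0 : ∀ k, 0 ≤ D k)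
    (hD' : ∀ k, D (k + 1) ≤ D k) (k : ℕ) : ((k : ℝ) + 1) ^ 2 * D k ≤ 2 * m 0 := by
  have key : ∀ k : ℕ, ((k : ℝ) + 1) * (k + 2) / 2 * D k
      ≤ m 0 - m (k + 1) - (k + 1) * (m (k + 1) - m (k + 2)) := by
    intro k
    induction k with
    | zero => simp [hD]; linarith
    | succ k ih =>
      have h1 : ((k : ℝ) + 1) * (k + 2) / 2 * D (k + 1) ≤ ((k : ℝ) + 1) * (k + 2) / 2 * D k :=
        mul_le_mul_of_nonneg_left (hD' k) (by positivity)
      have h2 := hD (k + 1)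
      push_cast
      have e1 : m (k + 1 + 1) = m (k + 2) := rfl
      have e2 : m (k + 1 + 2) = m (k + 3) := rfl
      rw [e1, e2] at *
      have h3 : ((k : ℝ) + 2) * D (k + 1) = (k + 2) * (m (k + 1) - 2 * m (k + 2) + m (k + 3)) := by
        rw [h2]
      nlinarith
  have h1 := key k
  have h2 := hm (k + 1)
  have h3 : 0 ≤ ((k : ℝ) + 1) * (m (k + 1) - m (k + 2)) :=
    mul_nonneg (by positivity) (by linarith [hm' (k + 1)])
  have h4 := mul_nonneg (by positivity : (0 : ℝ) ≤ (k : ℝ) + 1) (hD0 k)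
  nlinarith

variable {Ω : Type} [Fintype Ω] [DecidableEq Ω]

theorem stoch_jensen {P : Matrix Ω Ω ℝ} (hP : IsStochastic P) (f : Ω → ℝ) (x : Ω) :
    ((P *ᵥ f) x) ^ 2 ≤ ∑ y, P x y * f y ^ 2 := by
  have := Finset.sum_mul_sq_le_sq_mul_sq (s := Finset.univ) (f := fun y => Real.sqrt (P x y))
    (g := fun y => Real.sqrt (P x y) * f y)
  have h1 : ∀ y, Real.sqrt (P x y) * (Real.sqrt (P x y) * f y) = P x y * f y := fun y => by
    rw [← mul_assoc, Real.mul_self_sqrt (hP.1 x y)]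
  have h2 : ∀ y, Real.sqrt (P x y) ^ 2 = P x y := fun y => Real.sq_sqrt (hP.1 x y)
  simp only [h1, mul_pow, h2, hP.2 x, one_mul] at this
  exact this

theorem l2_contr {P : Matrix Ω Ω ℝ} {pi : Ω → ℝ} (h : IsRevMC P pi) (f : Ω → ℝ) :
    ∑ x, pi x * (P *ᵥ f) x ^ 2 ≤ ∑ x, pi x * f x ^ 2 := by
  obtain ⟨⟨hP, -, hpi, hst⟩, -⟩ := h
  calc ∑ x, pi x * (P *ᵥ f) x ^ 2 ≤ ∑ x, pi x * ∑ y, P x y * f y ^ 2 :=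
        Finset.sum_le_sum fun x _ => mul_le_mul_of_nonneg_left (stoch_jensen hP f x) (hpi.1 x)
    _ = ∑ y, (pi ᵥ* P) y * f y ^ 2 := by
        simp only [vecMul, dotProduct, Finset.mul_sum, Finset.sum_mul]
        rw [Finset.sum_comm]
        simp only [mul_assoc]
    _ = _ := by rw [hst]

theorem self_adj {P : Matrix Ω Ω ℝ} {pi : Ω → ℝ} (h : IsRevMC P pi) (f g : Ω → ℝ) :
    ∑ x, pi x * ((P *ᵥ f) x * g x) = ∑ x, pi x * (f x * (P *ᵥ g) x) := by
  have hr := h.2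
  simp only [mulVec, dotProduct, Finset.mul_sum, Finset.sum_mul]
  rw [Finset.sum_comm]
  refine Finset.sum_congr rfl fun y _ => Finset.sum_congr rfl fun x _ => ?_
  have := hr x y
  calc pi x * (P x y * f y * g x) = (pi x * P x y) * f y * g x := by ring
    _ = _ := by rw [this]; ring

theorem diff_l2 {P : Matrix Ω Ω ℝ} {pi : Ω → ℝ} (h : IsRevMC P pi) (f : Ω → ℝ) (k : ℕ) :
    ((k : ℝ) + 1) ^ 2 * ∑ x, pi x * ((P ^ k *ᵥ f) x - (P ^ (k + 2) *ᵥ f) x) ^ 2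
      ≤ 2 * ∑ x, pi x * f x ^ 2 := by
  have hpi := h.1.2.2.1.1
  have hs : ∀ k : ℕ, P ^ (k + 1) *ᵥ f = P *ᵥ (P ^ k *ᵥ f) := fun k => by
    rw [mulVec_mulVec, pow_succ']
  have := second_diff_bound (fun k => ∑ x, pi x * (P ^ k *ᵥ f) x ^ 2)
    (fun k => ∑ x, pi x * ((P ^ k *ᵥ f) x - (P ^ (k + 2) *ᵥ f) x) ^ 2)
    (fun k => Finset.sum_nonneg fun x _ => mul_nonneg (hpi x) (sq_nonneg _))
    (fun k => by simpa only [hs] using l2_contr h (P ^ k *ᵥ f))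
    (fun k => by
      have h1 := self_adj h (P ^ k *ᵥ f) (P ^ (k + 1) *ᵥ f)
      rw [← hs, ← hs] at h1
      have h2 : ∑ x, pi x * (P ^ (k + 1) *ᵥ f) x ^ 2
          = ∑ x, pi x * ((P ^ k *ᵥ f) x * (P ^ (k + 2) *ᵥ f) x) := by
        rw [← h1]; simp only [sq]
      simp only [h2]
      rw [Finset.mul_sum, ← Finset.sum_sub_distrib, ← Finset.sum_add_distrib]
      exact Finset.sum_congr rfl fun x _ => by ring)
    (fun k => Finset.sum_nonneg fun x _ => mul_nonneg (hpi x) (sq_nonneg _))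
    (fun k => by
      have := l2_contr h (P ^ k *ᵥ f - P ^ (k + 2) *ᵥ f)
      rw [mulVec_sub, ← hs, ← hs] at this
      simpa only [Pi.sub_apply] using this) k
  simpa using this

theorem prob_abs_le {pi : Ω → ℝ} (hpi : IsProbVec pi) (g : Ω → ℝ) :
    (∑ x, pi x * |g x|) ^ 2 ≤ ∑ x, pi x * g x ^ 2 := by
  have := stoch_jensen (P := fun _ : Ω => pi) ⟨fun _ => hpi.1, fun _ => hpi.2⟩ (fun x => |g x|)
  by_cases hne : Nonempty Ω
  · obtain ⟨x⟩ := hne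
    simpa [mulVec, dotProduct] using this x
  · rw [not_nonempty_iff] at hne
    simp

/-- averaged function -/
noncomputable def aveF (P : Matrix Ω Ω ℝ) (f : Ω → ℝ) (k : ℕ) : Ω → ℝ :=
  fun x => ((P ^ k *ᵥ f) x + (P ^ (k + 1) *ᵥ f) x) / 2

theorem diff_l1 {P : Matrix Ω Ω ℝ} {pi : Ω → ℝ} (h : IsRevMC P pi) (f : Ω → ℝ)
    (hf0 : ∀ x, 0 ≤ f x) (hf1 : ∀ x, f x ≤ 1) (k : ℕ) :
    ∑ x, pi x * |aveF P f (k + 1) x - aveF P f k x| ≤ 1 / ((k : ℝ) + 1) := by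
  have hpi := h.1.2.2.1
  have h1 := prob_abs_le hpi (fun x => aveF P f (k + 1) x - aveF P f k x)
  have h2 := diff_l2 h f k
  have h3 : ∑ x, pi x * f x ^ 2 ≤ 1 := by
    rw [← hpi.2]
    exact Finset.sum_le_sum fun x _ => by
      have := hpi.1 x
      have : f x ^ 2 ≤ 1 := pow_le_one₀ (hf0 x) (hf1 x)
      nlinarith
  have h4 : ∑ x, pi x * (aveF P f (k + 1) x - aveF P f k x) ^ 2
      = (∑ x, pi x * ((P ^ k *ᵥ f) x - (P ^ (k + 2) *ᵥ f) x) ^ 2) / 4 := by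
    rw [Finset.sum_div]
    refine Finset.sum_congr rfl fun x _ => ?_
    simp only [aveF]
    ring
  rw [h4] at h1
  have hk : (0 : ℝ) < (k : ℝ) + 1 := by positivity
  refine abs_le_of_sq_le_sq' ?_ (by positivity) |>.2
  rw [div_pow, one_pow, le_div_iff₀ (by positivity)]
  nlinarith [sq_nonneg ((k : ℝ) + 1), mul_le_mul_of_nonneg_left h1 (sq_nonneg ((k : ℝ) + 1))]

theorem prob_step {P : Matrix Ω Ω ℝ} (hP : IsStochastic P) {μ : Ω → ℝ} (hμ : IsProbVec μ) (k : ℕ) :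
    IsProbVec (μ ᵥ* P ^ k) := by
  induction k with
  | zero => simpa using hμ
  | succ k ih =>
    rw [pow_succ, ← vecMul_vecMul]
    refine ⟨fun x => Finset.sum_nonneg fun y _ => mul_nonneg (ih.1 y) (hP.1 y x), ?_⟩
    rw [← ih.2]
    simp only [vecMul, dotProduct]
    rw [Finset.sum_comm]
    refine Finset.sum_congr rfl fun y _ => ?_
    rw [← Finset.mul_sum, hP.2 y, mul_one]

theorem pow_mulVec_mem {P : Matrix Ω Ω ℝ} (hP : IsStochastic P) {f : Ω → ℝ}
    (hf0 : ∀ x, 0 ≤ f x) (hf1 : ∀ x, f x ≤ 1) (k : ℕ) :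
    ∀ x, 0 ≤ (P ^ k *ᵥ f) x ∧ (P ^ k *ᵥ f) x ≤ 1 := by
  induction k with
  | zero => simpa using fun x => ⟨hf0 x, hf1 x⟩
  | succ k ih =>
    intro x
    rw [pow_succ', ← mulVec_mulVec]
    refine ⟨Finset.sum_nonneg fun y _ => mul_nonneg (hP.1 x y) (ih y).1, ?_⟩
    rw [← hP.2 x]
    exact Finset.sum_le_sum fun y _ => by
      have := hP.1 x y
      have := (ih y).2
      nlinarith

theorem aveF_mem {P : Matrix Ω Ω ℝ} (hP : IsStochastic P) {f : Ω → ℝ}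
    (hf0 : ∀ x, 0 ≤ f x) (hf1 : ∀ x, f x ≤ 1) (k : ℕ) (x : Ω) :
    0 ≤ aveF P f k x ∧ aveF P f k x ≤ 1 := by
  have h1 := pow_mulVec_mem hP hf0 hf1 k x
  have h2 := pow_mulVec_mem hP hf0 hf1 (k + 1) x
  simp only [aveF]
  constructor <;> linarith

theorem dot_le_one {μ g : Ω → ℝ} (hμ : IsProbVec μ) (hg : ∀ x, g x ≤ 1) : μ ⬝ᵥ g ≤ 1 := by
  rw [← hμ.2]
  exact Finset.sum_le_sum fun x _ => by
    have := hμ.1 x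
    have := hg x
    nlinarith

theorem dot_nonneg' {μ g : Ω → ℝ} (hμ : IsProbVec μ) (hg : ∀ x, 0 ≤ g x) : 0 ≤ μ ⬝ᵥ g :=
  Finset.sum_nonneg fun x _ => mul_nonneg (hμ.1 x) (hg x)

theorem dot_mono {μ g g' : Ω → ℝ} (hμ : IsProbVec μ) (hg : ∀ x, g x ≤ g' x) :
    μ ⬝ᵥ g ≤ μ ⬝ᵥ g' :=
  Finset.sum_le_sum fun x _ => mul_le_mul_of_nonneg_left (hg x) (hμ.1 x)

/-- Bound of difference of integrals by TV. -/
theorem dot_sub_le_tv {μ ν g : Ω → ℝ} (hμ : IsProbVec μ) (hν : IsProbVec ν)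
    (hg0 : ∀ x, 0 ≤ g x) (hg1 : ∀ x, g x ≤ 1) : μ ⬝ᵥ g ≤ ν ⬝ᵥ g + tvDist μ ν := by
  have h1 : ∑ x, (μ x - ν x) * (g x - 1 / 2) ≤ ∑ x, |μ x - ν x| / 2 := by
    refine Finset.sum_le_sum fun x _ => ?_
    refine (le_abs_self _).trans ?_
    rw [abs_mul, div_eq_mul_one_div]
    refine mul_le_mul_of_nonneg_left ?_ (abs_nonneg _)
    rw [abs_le]
    constructor <;> linarith [hg0 x, hg1 x]
  have h2 : ∑ x, (μ x - ν x) * (g x - 1 / 2) = μ ⬝ᵥ g - ν ⬝ᵥ g := by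
    have : ∀ x, (μ x - ν x) * (g x - 1 / 2) = (μ x * g x - ν x * g x) - (μ x - ν x) * (1 / 2) :=
      fun x => by ring
    simp only [this]
    rw [Finset.sum_sub_distrib, ← Finset.sum_mul, Finset.sum_sub_distrib, Finset.sum_sub_distrib,
      hμ.2, hν.2]
    simp [dotProduct]
  rw [tvDist, Finset.sum_div]
  linarith

theorem tv_le_of {μ ν : Ω → ℝ} (hμ : IsProbVec μ) (hν : IsProbVec ν) (ε : ℝ)
    (h : ∀ g : Ω → ℝ, (∀ x, 0 ≤ g x) → (∀ x, g x ≤ 1) → μ ⬝ᵥ g ≤ ν ⬝ᵥ g + ε) :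
    tvDist μ ν ≤ ε := by
  have h0 := h (fun x => if ν x ≤ μ x then 1 else 0) (fun x => by split_ifs <;> simp)
    (fun x => by split_ifs <;> simp)
  have h1 : ∑ x, |μ x - ν x| = ∑ x, (2 * (μ x * (if ν x ≤ μ x then 1 else 0)
      - ν x * (if ν x ≤ μ x then 1 else 0)) - (μ x - ν x)) := by
    refine Finset.sum_congr rfl fun x _ => ?_
    split_ifs with hx
    · rw [abs_of_nonneg (by linarith)]; ring
    · rw [abs_of_neg (by linarith)]; ring
  rw [Finset.sum_sub_distrib, ← Finset.mul_sum, Finset.sum_sub_distrib, Finset.sum_sub_distrib,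
    hμ.2, hν.2] at h1
  simp only [dotProduct] at h0
  rw [tvDist, h1]
  linarith

theorem tv_le_one {μ ν : Ω → ℝ} (hμ : IsProbVec μ) (hν : IsProbVec ν) : tvDist μ ν ≤ 1 :=
  tv_le_of hμ hν 1 fun g h0 h1 => by
    have := dot_le_one hμ h1
    have := dot_nonneg' hν h0
    linarith

theorem stat_pow {P : Matrix Ω Ω ℝ} {pi : Ω → ℝ} (h : pi ᵥ* P = pi) (k : ℕ) :
    pi ᵥ* P ^ k = pi := by
  induction k with
  | zero => simp
  | succ k ih => rw [pow_succ, ← vecMul_vecMul, ih, h]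

theorem dot_aveF (P : Matrix Ω Ω ℝ) (μ f : Ω → ℝ) (k : ℕ) :
    μ ⬝ᵥ aveF P f k = ((μ ᵥ* P ^ k) ⬝ᵥ f + (μ ᵥ* P ^ (k + 1)) ⬝ᵥ f) / 2 := by
  rw [← dotProduct_mulVec, ← dotProduct_mulVec]
  simp only [dotProduct, aveF]
  rw [← Finset.sum_add_distrib, Finset.sum_div]
  exact Finset.sum_congr rfl fun x _ => by ring

theorem dot_aveF_split (P : Matrix Ω Ω ℝ) (μ f : Ω → ℝ) (j k : ℕ) :
    μ ⬝ᵥ aveF P f (j + k) = (μ ᵥ* P ^ j) ⬝ᵥ aveF P f k := by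
  rw [dot_aveF, dot_aveF, vecMul_vecMul, vecMul_vecMul, ← pow_add, ← pow_add, add_assoc]

theorem lazy_pow (P : Matrix Ω Ω ℝ) (n : ℕ) :
    lazyM P ^ n = ∑ j ∈ Finset.range (n + 1), ((n.choose j : ℝ) / 2 ^ n) • P ^ j := by
  rw [lazyM, smul_pow, add_comm, (Commute.one_right P).add_pow, Finset.smul_sum]
  refine Finset.sum_congr rfl fun j _ => ?_
  rw [one_pow, mul_one, ← Nat.cast_comm, ← nsmul_eq_mul, ← Nat.cast_smul_eq_nsmul ℝ, smul_smul,
    inv_pow]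
  congr 1
  ring

theorem lazy_dot (P : Matrix Ω Ω ℝ) (μ g : Ω → ℝ) (n : ℕ) :
    (μ ᵥ* lazyM P ^ n) ⬝ᵥ g
      = ∑ j ∈ Finset.range (n + 1), ((n.choose j : ℝ) / 2 ^ n) * ((μ ᵥ* P ^ j) ⬝ᵥ g) := by
  rw [← dotProduct_mulVec, lazy_pow, sum_mulVec, dotProduct_sum]
  refine Finset.sum_congr rfl fun j _ => ?_
  rw [smul_mulVec, dotProduct_smul, smul_eq_mul, dotProduct_mulVec]

theorem lazy_stoch {P : Matrix Ω Ω ℝ} (hP : IsStochastic P) : IsStochastic (lazyM P) := by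
  refine ⟨fun x y => ?_, fun x => ?_⟩
  · have := hP.1 x y
    simp only [lazyM, Matrix.smul_apply, Matrix.add_apply, smul_eq_mul, one_apply]
    split_ifs <;> linarith
  · simp only [lazyM, Matrix.smul_apply, Matrix.add_apply, smul_eq_mul, one_apply]
    rw [← Finset.mul_sum, Finset.sum_add_distrib, hP.2 x]
    simp
    norm_num

theorem binom_sum_one (n : ℕ) : ∑ j ∈ Finset.range (n + 1), ((n.choose j : ℝ) / 2 ^ n) = 1 := by
  rw [← Finset.sum_div, ← Nat.cast_sum, Nat.sum_range_choose]
  simp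

theorem binom_mgf (n : ℕ) (l : ℝ) :
    ∑ j ∈ Finset.range (n + 1), ((n.choose j : ℝ) / 2 ^ n) * Real.exp (l * (j - n / 2))
      ≤ Real.exp (n * l ^ 2 / 8) := by
  have h1 : ∑ j ∈ Finset.range (n + 1), ((n.choose j : ℝ) / 2 ^ n) * Real.exp (l * (j - n / 2))
      = Real.cosh (l / 2) ^ n := by
    rw [Real.cosh_eq, div_pow, add_pow, Finset.sum_div]
    refine Finset.sum_congr rfl fun j hj => ?_
    have hj' : j ≤ n := by simpa [Nat.lt_succ_iff] using hj
    rw [← Real.exp_nat_mul, ← Real.exp_nat_mul, ← Real.exp_add, Nat.cast_sub hj']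
    have : (j : ℝ) * (l / 2) + ((n : ℝ) - j) * -(l / 2) = l * (j - n / 2) := by ring
    rw [this]
    ring
  rw [h1]
  calc Real.cosh (l / 2) ^ n ≤ Real.exp ((l / 2) ^ 2 / 2) ^ n :=
        pow_le_pow_left₀ (Real.cosh_pos _).le (Real.cosh_le_exp_half_sq _) n
    _ = _ := by rw [← Real.exp_nat_mul]; congr 1; ring

theorem binom_tail (n : ℕ) (t J : ℝ) (ht : 0 < t) (hn : (n : ℝ) ≤ 2 * t) (hJ : 0 ≤ J) :
    ∑ j ∈ Finset.range (n + 1), ((n.choose j : ℝ) / 2 ^ n) *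
      (if |(j : ℝ) - n / 2| ≤ J then 0 else 1) ≤ 2 * Real.exp (-(J ^ 2 / t)) := by
  set l := 2 * J / t with hl
  have hl0 : 0 ≤ l := by positivity
  have key : ∀ l' : ℝ, l' ^ 2 = l ^ 2 →
      Real.exp (-(l * J)) * ∑ j ∈ Finset.range (n + 1),
        ((n.choose j : ℝ) / 2 ^ n) * Real.exp (l' * (j - n / 2)) ≤ Real.exp (-(J ^ 2 / t)) := by
    intro l' hl'
    refine (mul_le_mul_of_nonneg_left (binom_mgf n l') (Real.exp_pos _).le).trans ?_
    rw [← Real.exp_add, Real.exp_le_exp, hl']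
    have : (n : ℝ) * l ^ 2 / 8 ≤ 2 * t * l ^ 2 / 8 := by gcongr
    have e : -(l * J) + 2 * t * l ^ 2 / 8 = -(J ^ 2 / t) := by
      rw [hl]; field_simp; ring
    linarith
  have h1 := key l rfl
  have h2 := key (-l) (by ring)
  refine le_trans ?_ ((add_le_add h1 h2).trans_eq (by ring))
  rw [Finset.mul_sum, Finset.mul_sum, ← Finset.sum_add_distrib]
  refine Finset.sum_le_sum fun j _ => ?_
  have hp : (0 : ℝ) ≤ (n.choose j : ℝ) / 2 ^ n := by positivity
  have e : Real.exp (-(l * J)) * ((n.choose j : ℝ) / 2 ^ n * Real.exp (l * (j - n / 2)))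
      + Real.exp (-(l * J)) * ((n.choose j : ℝ) / 2 ^ n * Real.exp (-l * (j - n / 2)))
      = (n.choose j : ℝ) / 2 ^ n * (Real.exp (l * ((j - n / 2) - J))
        + Real.exp (l * (-(j - n / 2) - J))) := by
    have e1 : l * (((j : ℝ) - n / 2) - J) = -(l * J) + l * (j - n / 2) := by ring
    have e2 : l * (-((j : ℝ) - n / 2) - J) = -(l * J) + -l * (j - n / 2) := by ring
    rw [e1, e2, Real.exp_add, Real.exp_add]
    ring
  rw [e]
  refine mul_le_mul_of_nonneg_left ?_ hp
  have p1 := Real.exp_pos (l * (((j : ℝ) - n / 2) - J))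
  have p2 := Real.exp_pos (l * (-((j : ℝ) - n / 2) - J))
  split_ifs with hc
  · linarith
  · rw [not_le, lt_abs] at hc
    rcases hc with hc | hc
    · have : 1 ≤ Real.exp (l * (((j : ℝ) - n / 2) - J)) :=
        Real.one_le_exp (mul_nonneg hl0 (by linarith))
      linarith
    · have : 1 ≤ Real.exp (l * (-((j : ℝ) - n / 2) - J)) :=
        Real.one_le_exp (mul_nonneg hl0 (by linarith))
      linarith

theorem tele_le (v : ℕ → ℝ) (a w k : ℕ) (h1 : a ≤ k) (h2 : k ≤ a + w) :
    v k ≤ v a + ∑ i ∈ Finset.range w, |v (a + i + 1) - v (a + i)| := by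
  obtain ⟨d, rfl⟩ := Nat.exists_eq_add_of_le h1
  have hd : d ≤ w := by omega
  have h3 : ∀ d : ℕ, v (a + d) ≤ v a + ∑ i ∈ Finset.range d, |v (a + i + 1) - v (a + i)| := by
    intro d
    induction d with
    | zero => simp
    | succ d ih =>
      rw [Finset.sum_range_succ]
      have := le_abs_self (v (a + d + 1) - v (a + d))
      have e : a + (d + 1) = a + d + 1 := rfl
      rw [e]
      linarith
  refine (h3 d).trans ?_
  have := Finset.sum_le_sum_of_subset_of_nonneg (f := fun i => |v (a + i + 1) - v (a + i)|)
    (Finset.range_mono hd) (fun _ _ _ => abs_nonneg _)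
  linarith

/-- Core comparison. -/
theorem core {P : Matrix Ω Ω ℝ} {pi μ f : Ω → ℝ} (h : IsRevMC P pi) (hμ : IsProbVec μ)
    (hf0 : ∀ x, 0 ≤ f x) (hf1 : ∀ x, f x ≤ 1) (n s a w : ℕ) (J : ℝ)
    (hgood : ∀ j : ℕ, |(j : ℝ) - n / 2| ≤ J → a + j ≤ s ∧ s ≤ a + w + j) :
    μ ⬝ᵥ aveF P f s ≤ pi ⬝ᵥ f + tvDist (μ ᵥ* lazyM P ^ n) pi + w / ((a : ℝ) + 1) +
      ∑ j ∈ Finset.range (n + 1), ((n.choose j : ℝ) / 2 ^ n) *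
        (if |(j : ℝ) - n / 2| ≤ J then 0 else 1) := by
  obtain ⟨hP, hirr, hpi, hst⟩ := h.1
  set u : Ω → ℝ := fun x => aveF P f a x +
    ∑ i ∈ Finset.range w, |aveF P f (a + i + 1) x - aveF P f (a + i) x| with hu
  set u' : Ω → ℝ := fun x => min 1 (u x) with hu'
  have hu0 : ∀ x, 0 ≤ u' x := fun x => le_min zero_le_one
    (add_nonneg (aveF_mem hP hf0 hf1 a x).1 (Finset.sum_nonneg fun _ _ => abs_nonneg _))
  have hu1 : ∀ x, u' x ≤ 1 := fun x => min_le_left _ _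
  have hku : ∀ k, a ≤ k → k ≤ a + w → ∀ x, aveF P f k x ≤ u' x := fun k h1 h2 x =>
    le_min (aveF_mem hP hf0 hf1 k x).2 (tele_le (fun k => aveF P f k x) a w k h1 h2)
  -- step 1
  have s1 : μ ⬝ᵥ aveF P f s ≤ (μ ᵥ* lazyM P ^ n) ⬝ᵥ u' +
      ∑ j ∈ Finset.range (n + 1), ((n.choose j : ℝ) / 2 ^ n) *
        (if |(j : ℝ) - n / 2| ≤ J then 0 else 1) := by
    rw [lazy_dot, ← Finset.sum_add_distrib]
    have e : μ ⬝ᵥ aveF P f s = ∑ j ∈ Finset.range (n + 1), ((n.choose j : ℝ) / 2 ^ n) *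
        (μ ⬝ᵥ aveF P f s) := by
      rw [← Finset.sum_mul, binom_sum_one, one_mul]
    rw [e]
    refine Finset.sum_le_sum fun j _ => ?_
    rw [← mul_add]
    refine mul_le_mul_of_nonneg_left ?_ (by positivity)
    split_ifs with hc
    · obtain ⟨h1, h2⟩ := hgood j hc
      have e2 : s = j + (s - j) := by omega
      rw [e2, dot_aveF_split, add_zero]
      exact dot_mono (prob_step hP hμ j) (hku _ (by omega) (by omega))
    · have := dot_le_one hμ (fun x => (aveF_mem hP hf0 hf1 s x).2)
      have := dot_nonneg' (prob_step hP hμ j) hu0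
      linarith
  have s2 := dot_sub_le_tv (prob_step (lazy_stoch hP) hμ n) hpi hu0 hu1
  have s3 : pi ⬝ᵥ u' ≤ pi ⬝ᵥ u := dot_mono hpi fun x => min_le_right _ _
  have s4 : pi ⬝ᵥ u = pi ⬝ᵥ f + ∑ i ∈ Finset.range w,
      ∑ x, pi x * |aveF P f (a + i + 1) x - aveF P f (a + i) x| := by
    have e : pi ⬝ᵥ aveF P f a = pi ⬝ᵥ f := by
      rw [dot_aveF, stat_pow hst, stat_pow hst]; ring
    rw [← e, Finset.sum_comm]
    simp only [dotProduct, hu, mul_add, Finset.sum_add_distrib, Finset.mul_sum]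
  have s5 : ∑ i ∈ Finset.range w,
      ∑ x, pi x * |aveF P f (a + i + 1) x - aveF P f (a + i) x| ≤ w / ((a : ℝ) + 1) := by
    have : ∀ i ∈ Finset.range w, ∑ x, pi x * |aveF P f (a + i + 1) x - aveF P f (a + i) x|
        ≤ 1 / ((a : ℝ) + 1) := fun i _ => by
      refine (diff_l1 h f hf0 hf1 (a + i)).trans ?_
      push_cast
      exact one_div_le_one_div_of_le (by positivity) (by linarith [Nat.cast_nonneg (α := ℝ) i])
    refine (Finset.sum_le_sum this).trans ?_
    rw [Finset.sum_const, Finset.card_range, nsmul_eq_mul, mul_one_div]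
  linarith

theorem ave_prob {P : Matrix Ω Ω ℝ} (hP : IsStochastic P) {μ : Ω → ℝ} (hμ : IsProbVec μ) (k : ℕ) :
    IsProbVec (fun y => ((μ ᵥ* (P ^ k)) y + (μ ᵥ* (P ^ (k + 1))) y) / 2) := by
  have h1 := prob_step hP hμ k
  have h2 := prob_step hP hμ (k + 1)
  refine ⟨fun x => by have := h1.1 x; have := h2.1 x; dsimp only; linarith, ?_⟩
  rw [← Finset.sum_div, Finset.sum_add_distrib, h1.2, h2.2]
  norm_num

theorem tv_nonneg (μ ν : Ω → ℝ) : 0 ≤ tvDist μ ν :=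
  div_nonneg (Finset.sum_nonneg fun _ _ => abs_nonneg _) (by norm_num)

theorem main_mu {P : Matrix Ω Ω ℝ} {pi : Ω → ℝ} (h : IsRevMC P pi) (α t : ℝ) (hα : 0 < α)
    (ht : 1 ≤ t) (μ : Ω → ℝ) (hμ : IsProbVec μ) :
    aveDist P pi (phiAC α 4 t) μ ≤ lazyDist P pi (2 * t) μ + 3 * t ^ (-α) := by
  obtain ⟨hP, hirr, hpi, hst⟩ := h.1
  have ht0 : 0 < t := by linarith
  have hlog : 0 ≤ Real.log t := Real.log_nonneg ht
  have hrp : t ^ (-α) = Real.exp (-(α * Real.log t)) := by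
    rw [Real.rpow_def_of_pos ht0]; congr 1; ring
  have hrp' : t ^ α = Real.exp (α * Real.log t) := by
    rw [Real.rpow_def_of_pos ht0]; congr 1; ring
  rcases lt_or_ge (α * Real.log t) 1 with hsm | hbig
  · have h1 : aveDist P pi (phiAC α 4 t) μ ≤ 1 := tv_le_one (ave_prob hP hμ _) hpi
    have h2 : 0 ≤ lazyDist P pi (2 * t) μ := tv_nonneg _ _
    have h3 : 1 ≤ 3 * t ^ (-α) := by
      rw [hrp, Real.exp_neg, ← div_eq_mul_inv, le_div_iff₀ (Real.exp_pos _), one_mul]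
      have := Real.exp_le_exp.2 hsm.le
      linarith [Real.exp_one_lt_d9]
    linarith
  set L := Real.sqrt (α * Real.log t) with hL
  have hL2 : L ^ 2 = α * Real.log t := Real.sq_sqrt (by linarith)
  have hL1 : 1 ≤ L := Real.one_le_sqrt.2 hbig
  set J := Real.sqrt t * L with hJ
  have hst1 : 1 ≤ Real.sqrt t := Real.one_le_sqrt.2 ht
  have hJ1 : 1 ≤ J := one_le_mul_of_one_le_of_one_le hst1 hL1
  have hJ2 : J ^ 2 / t = α * Real.log t := by
    rw [hJ, mul_pow, Real.sq_sqrt ht0.le, hL2]; field_simp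
  set T := t ^ α with hT
  have hT1 : 2 ≤ T := by
    rw [hrp']
    have := Real.add_one_le_exp (α * Real.log t)
    linarith
  set M : ℝ := ((⌈4 * t ^ ((1 + 2 * α) / 2) * L⌉ : ℤ) : ℝ) with hM
  have hMJ : 4 * (J * T) ≤ M := by
    refine le_trans (le_of_eq ?_) (Int.le_ceil _)
    have : (1 + 2 * α) / 2 = 1 / 2 + α := by ring
    rw [this, Real.rpow_add ht0, ← Real.sqrt_eq_rpow, hJ]
    ring
  have hJT : 2 * J ≤ J * T := by nlinarith
  have hphi : phiAC α 4 t = t + M := rfl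
  set s := ⌊t + M⌋₊ with hs
  set n := ⌊2 * t⌋₊ with hn
  have hn2 : (n : ℝ) ≤ 2 * t := Nat.floor_le (by linarith)
  have hs1 : t + M - 1 < s := by
    have := Nat.lt_floor_add_one (t + M); linarith
  set a := ⌈(s : ℝ) - n / 2 - J⌉₊ with ha
  set w := ⌊2 * J⌋₊ with hw
  have hx0 : 0 ≤ (s : ℝ) - n / 2 - J := by linarith
  have haJ : (s : ℝ) - n / 2 - J ≤ a := Nat.le_ceil _
  have hgood : ∀ j : ℕ, |(j : ℝ) - n / 2| ≤ J → a + j ≤ s ∧ s ≤ a + w + j := by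
    intro j hj
    rw [abs_le] at hj
    have hjs : j ≤ s := by
      have : (j : ℝ) ≤ s := by linarith
      exact_mod_cast this
    have h1 : a ≤ s - j := by
      rw [ha, Nat.ceil_le, Nat.cast_sub hjs]; linarith
    have h2 : s - j - a ≤ w := by
      rw [hw]
      apply Nat.le_floor
      rw [Nat.cast_sub h1, Nat.cast_sub hjs]; linarith
    omega
  have htail := binom_tail n t J ht0 hn2 (by linarith)
  rw [hJ2, ← hrp] at htail
  have hw2 : (w : ℝ) / ((a : ℝ) + 1) ≤ t ^ (-α) := by
    have hwJ : (w : ℝ) ≤ 2 * J := Nat.floor_le (by linarith)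
    rw [Real.rpow_neg ht0.le, ← hT, div_le_iff₀ (by positivity), inv_mul_eq_div,
      le_div_iff₀ (by linarith)]
    have : (w : ℝ) * T ≤ 2 * J * T := by gcongr
    linarith
  unfold aveDist lazyDist
  rw [hphi, ← hs, ← hn]
  refine tv_le_of (ave_prob hP hμ _) hpi _ fun g hg0 hg1 => ?_
  have hc := core h hμ hg0 hg1 n s a w J hgood
  have e : (fun y => ((μ ᵥ* (P ^ s)) y + (μ ᵥ* (P ^ (s + 1))) y) / 2) ⬝ᵥ g
      = μ ⬝ᵥ aveF P g s := by
    rw [dot_aveF]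
    simp only [dotProduct]
    rw [← Finset.sum_add_distrib, Finset.sum_div]
    exact Finset.sum_congr rfl fun x _ => by ring
  rw [e]
  linarith

end Helpers

/-- **Theorem 1 (eq. (2)) of Hermon–Peres.**
There are absolute constants `C₁, C₂ > 0` such that for every finite irreducible reversible
Markov chain, every initial distribution `μ`, every `0 < α ≤ 1/2` and every `t ≥ 1`,
`d_ave(φ_{α,C₁}(t), μ) ≤ d_L(2t, μ) + C₂ t^{-α}`, and the same holds for the worst-case
distances. -/
theorem ave_dist_le_lazy_dist :
    ∃ C₁ C₂ : ℝ, 0 < C₁ ∧ 0 < C₂ ∧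
      ∀ (Ω : Type) [Fintype Ω] [DecidableEq Ω] [Nonempty Ω]
        (P : Matrix Ω Ω ℝ) (pi : Ω → ℝ), IsRevMC P pi →
        ∀ α t : ℝ, 0 < α → α ≤ 1 / 2 → 1 ≤ t →
          (∀ μ : Ω → ℝ, IsProbVec μ →
            aveDist P pi (phiAC α C₁ t) μ ≤ lazyDist P pi (2 * t) μ + C₂ * t ^ (-α)) ∧
          aveDistMax P pi (phiAC α C₁ t) ≤ lazyDistMax P pi (2 * t) + C₂ * t ^ (-α) := by
  refine ⟨4, 3, by norm_num, by norm_num, ?_⟩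
  intro Ω _ _ _ P pi h α t hα _ ht
  refine ⟨fun μ hμ => main_mu h α t hα ht μ hμ, ?_⟩
  refine ciSup_le fun x => ?_
  have hx : IsProbVec (deltaMass x) := by
    refine ⟨fun y => ?_, by simp [deltaMass]⟩
    unfold deltaMass
    split_ifs <;> norm_num
  refine (main_mu h α t hα ht _ hx).trans ?_
  have := le_ciSup (Set.finite_range fun x : Ω => lazyDist P pi (2 * t) (deltaMass x)).bddAbove x
  unfold lazyDistMax
  linarith
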